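/- Let N₀ and N' be nilpotent endomorphisms of a finite-dimensional vector space generating a nilpotent Lie subalgebra, and let y be a scalar. Then exp(iy(N₀ + N')) exp(−iyN₀) = exp(Q) where Q = ((e^{ad(iyN₀)} − 1)/ad(iyN₀))(iyN') + R, with R lying in the Lie ideal generated by all brackets containing N' at least twice. In particular, modulo terms of degree ≥ 2 in N', Q = Σ_{m≥0} (1/(m+1)!) (ad(iyN₀))^m (iyN'). -/

import Mathlib

/-- Truncated exponential (the exponential, for nilpotent arguments). -/
noncomputable def expNil {V : Type*} [AddCommGroup V] [Module ℂ V] (α : Module.End ℂ V) :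
    Module.End ℂ V :=
  ∑ i ∈ Finset.range (Module.finrank ℂ V + 1), ((i.factorial : ℂ))⁻¹ • α ^ i

/-- The adjoint action `ad A = [A, ·]` on `End(V)`. -/
noncomputable def adE {V : Type*} [AddCommGroup V] [Module ℂ V] (A : Module.End ℂ V) :
    Module.End ℂ (Module.End ℂ V) :=
  LinearMap.mulLeft ℂ A - LinearMap.mulRight ℂ A

/-- `LieMon N₀ N' x m l`: `x` is an iterated Lie-bracket monomial in `N₀`, `N'`
containing `N'` exactly `m` times and of total length `l`. -/
inductive LieMon {V : Type*} [AddCommGroup V] [Module ℂ V] (N₀ N' : Module.End ℂ V) :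
    Module.End ℂ V → ℕ → ℕ → Prop
  | base0 : LieMon N₀ N' N₀ 0 1
  | base1 : LieMon N₀ N' N' 1 1
  | bracket {x y : Module.End ℂ V} {m n l k : ℕ} :
      LieMon N₀ N' x m l → LieMon N₀ N' y n k → LieMon N₀ N' ⁅x, y⁆ (m + n) (l + k)

/-- The commutator map `x ↦ a * x - x * a` as a `ℚ`-linear map. -/
noncomputable def commMap {A : Type*} [Ring A] [Algebra ℚ A] (a : A) : Module.End ℚ A :=
  LinearMap.mulLeft ℚ a - LinearMap.mulRight ℚ a

/-- The truncation to `M` terms of `((e^{ad z} - 1) / ad z) w`. -/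
noncomputable def dexpTrunc {A : Type*} [Ring A] [Algebra ℚ A] (M : ℕ) (z w : A) : A :=
  ∑ m ∈ Finset.range M, (((m + 1).factorial : ℚ))⁻¹ • (commMap z ^ m) w

section Exponential

variable {A B : Type*} [Ring A] [Algebra ℚ A] [Ring B] [Algebra ℚ B]

lemma commMap_apply (a x : A) : commMap a x = a * x - x * a := rfl

lemma commMap_pow_eq_zero {a : A} {k : ℕ} (h : a ^ k = 0) : commMap a ^ (2 * k) = 0 := by
  have hc : Commute (LinearMap.mulLeft ℚ a) (-LinearMap.mulRight ℚ a) :=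
    (LinearMap.commute_mulLeft_right (R := ℚ) a a).neg_right
  rw [commMap, sub_eq_add_neg]
  refine hc.add_pow_eq_zero_of_add_le_succ_of_pow_eq_zero (m := k) (n := k) ?_ ?_ (by omega)
  · rw [LinearMap.pow_mulLeft, h, LinearMap.mulLeft_zero_eq_zero]
  · have : -LinearMap.mulRight ℚ a = LinearMap.mulRight ℚ (-a) := by ext; simp
    rw [this, LinearMap.pow_mulRight, neg_pow, h, mul_zero, LinearMap.mulRight_zero_eq_zero]

lemma exp_mul_mul_exp_neg {a : A} (ha : IsNilpotent a) (x : A) :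
    IsNilpotent.exp a * x * IsNilpotent.exp (-a) = IsNilpotent.exp (commMap a) x := by
  obtain ⟨k, hk⟩ := ha
  have hk' : (-a) ^ k = 0 := by rw [neg_pow, hk, mul_zero]
  have hl : LinearMap.mulLeft ℚ a ^ k = 0 := by
    rw [LinearMap.pow_mulLeft, hk, LinearMap.mulLeft_zero_eq_zero]
  have hr : LinearMap.mulRight ℚ (-a) ^ k = 0 := by
    rw [LinearMap.pow_mulRight, hk', LinearMap.mulRight_zero_eq_zero]
  have hadd : commMap a = LinearMap.mulLeft ℚ a + LinearMap.mulRight ℚ (-a) := by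
    ext y
    simp [commMap_apply, sub_eq_add_neg]
  rw [hadd, IsNilpotent.exp_add_of_commute (LinearMap.commute_mulLeft_right (R := ℚ) a (-a))
    ⟨k, hl⟩ ⟨k, hr⟩, IsNilpotent.exp_eq_sum hl, IsNilpotent.exp_eq_sum hr,
    IsNilpotent.exp_eq_sum hk, IsNilpotent.exp_eq_sum hk']
  simp only [LinearMap.pow_mulLeft, LinearMap.pow_mulRight, Module.End.mul_apply,
    LinearMap.sum_apply, LinearMap.smul_apply, LinearMap.mulLeft_apply, LinearMap.mulRight_apply,
    smul_mul_assoc, mul_smul_comm, mul_assoc, Finset.sum_mul,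
    Finset.mul_sum, Finset.smul_sum]

lemma exp_mul_derivation_exp_neg (D : A →ₗ[ℚ] A) (hD : ∀ x y, D (x * y) = D x * y + x * D y)
    {z : A} {k M : ℕ} (hz : z ^ k = 0) (hM : 2 * k ≤ M) :
    IsNilpotent.exp z * D (IsNilpotent.exp (-z)) = -dexpTrunc M z (D z) := by
  have hL : LinearMap.mulLeft ℚ z ^ k = 0 := by
    rw [LinearMap.pow_mulLeft, hz, LinearMap.mulLeft_zero_eq_zero]
  have hz' : (-z) ^ k = 0 := by rw [neg_pow, hz, mul_zero]
  have hneg : -LinearMap.mulLeft ℚ z = LinearMap.mulLeft ℚ (-z) := by ext; simp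
  have hL' : LinearMap.mulLeft ℚ (-z) ^ k = 0 := by
    rw [LinearMap.pow_mulLeft, hz', LinearMap.mulLeft_zero_eq_zero]
  have hexp : ∀ x, IsNilpotent.exp (LinearMap.mulLeft ℚ z) x = IsNilpotent.exp z * x := by
    intro x
    rw [IsNilpotent.exp_eq_sum hL, IsNilpotent.exp_eq_sum hz]
    simp [LinearMap.pow_mulLeft, Finset.sum_mul]
  have hexp' : IsNilpotent.exp (-LinearMap.mulLeft ℚ z) 1 = IsNilpotent.exp (-z) := by
    rw [hneg, IsNilpotent.exp_eq_sum hL', IsNilpotent.exp_eq_sum hz']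
    simp [LinearMap.pow_mulLeft]
  have h1 : D 1 = 0 := by simpa using hD 1 1
  have hpow : ∀ m, (commMap (LinearMap.mulLeft ℚ z) ^ (m + 1)) D =
      -LinearMap.mulLeft ℚ ((commMap z ^ m) (D z)) := by
    intro m
    induction m with
    | zero =>
      ext x
      simp [commMap_apply, hD]
    | succ m ih =>
      rw [pow_succ', Module.End.mul_apply, ih, pow_succ' (commMap z), Module.End.mul_apply]
      ext x
      simp [commMap_apply, sub_mul, mul_assoc]
      abel
  have hconj := congrArg (fun T : Module.End ℚ A ↦ T 1) (exp_mul_mul_exp_neg ⟨k, hL⟩ D)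
  simp only [Module.End.mul_apply, hexp, hexp'] at hconj
  rw [hconj, IsNilpotent.exp_eq_sum (k := M + 1)
    (pow_eq_zero_of_le (by omega) (commMap_pow_eq_zero hL)), Finset.sum_range_succ']
  simp [hpow, dexpTrunc, h1]

lemma map_dexpTrunc (f : A →+* B) (M : ℕ) (z w : A) :
    f (dexpTrunc M z w) = dexpTrunc M (f z) (f w) := by
  have hpow : ∀ m, f ((commMap z ^ m) w) = (commMap (f z) ^ m) (f w) := by
    intro m
    induction m with
    | zero => simp
    | succ m ih => simp [pow_succ', commMap_apply, ih]
  simp [dexpTrunc, map_rat_smul, hpow]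

lemma dexpTrunc_zero_left {M : ℕ} (hM : 0 < M) (w : A) : dexpTrunc M 0 w = w := by
  obtain ⟨M, rfl⟩ := Nat.exists_eq_succ_of_ne_zero hM.ne'
  have h0 : commMap (0 : A) = 0 := by ext; simp [commMap_apply]
  simp [dexpTrunc, Finset.sum_range_succ', h0]

end Exponential

section GradedPolynomial

open Polynomial

variable {A : Type*} [Ring A] [Algebra ℚ A]

/-- Polynomials whose `k`-th coefficient lies in `G (k + s)`. -/
def gradedPoly (G : ℕ → Submodule ℚ A) (s : ℕ) : Submodule ℚ A[X] where
  carrier := {P | ∀ k, P.coeff k ∈ G (k + s)}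
  add_mem' hP hQ k := by
    rw [coeff_add]
    exact add_mem (hP k) (hQ k)
  zero_mem' k := by simp
  smul_mem' c P hP k := by
    rw [coeff_smul]
    exact (G (k + s)).smul_mem c (hP k)

variable {G : ℕ → Submodule ℚ A}

lemma commMap_mem_gradedPoly (hG : ∀ m n, ∀ x ∈ G m, ∀ y ∈ G n, x * y - y * x ∈ G (m + n))
    {s : ℕ} {Z W : A[X]} (hZ : Z ∈ gradedPoly G 0) (hW : W ∈ gradedPoly G s) :
    commMap Z W ∈ gradedPoly G s := by
  intro k
  rw [commMap_apply, coeff_sub, coeff_mul, coeff_mul, ← Finset.Nat.sum_antidiagonal_swap (n := k)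
    (f := fun p ↦ W.coeff p.1 * Z.coeff p.2), ← Finset.sum_sub_distrib]
  refine sum_mem fun p hp ↦ ?_
  have h := hG _ _ _ (hZ p.1) _ (hW p.2)
  have hp := Finset.HasAntidiagonal.mem_antidiagonal.mp hp
  rwa [show p.1 + 0 + (p.2 + s) = k + s by omega] at h

lemma dexpTrunc_mem_gradedPoly (hG : ∀ m n, ∀ x ∈ G m, ∀ y ∈ G n, x * y - y * x ∈ G (m + n))
    {s : ℕ} (M : ℕ) {Z W : A[X]} (hZ : Z ∈ gradedPoly G 0) (hW : W ∈ gradedPoly G s) :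
    dexpTrunc M Z W ∈ gradedPoly G s := by
  refine sum_mem fun m hm ↦ Submodule.smul_mem _ _ ?_
  clear hm
  induction m with
  | zero => simpa using hW
  | succ m ih =>
    rw [pow_succ', Module.End.mul_apply]
    exact commMap_mem_gradedPoly hG hZ ih

lemma derivative_mem_gradedPoly {Z : A[X]} (hZ : Z ∈ gradedPoly G 0) :
    derivative Z ∈ gradedPoly G 1 := by
  intro k
  have h := (G (k + 1)).smul_mem ((k : ℚ) + 1) (hZ (k + 1))
  rw [coeff_derivative]
  convert h using 1
  rw [add_smul, one_smul, mul_add, mul_one, ← Nat.cast_comm, Nat.cast_smul_eq_nsmul,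
    nsmul_eq_mul]

lemma pow_eq_zero_of_mem_gradedPoly {U : Submodule ℚ A} {k : ℕ} (hU : U ^ k = ⊥)
    (hGU : ∀ m, G m ≤ U) {s : ℕ} {Z : A[X]} (hZ : Z ∈ gradedPoly G s) : Z ^ k = 0 := by
  have h : ∀ n j, (Z ^ n).coeff j ∈ U ^ n := by
    intro n
    induction n with
    | zero =>
      intro j
      rw [pow_zero, pow_zero, coeff_one]
      split_ifs
      · exact Submodule.one_le.mp le_rfl
      · exact zero_mem _
    | succ n ih =>
      intro j
      rw [pow_succ, pow_succ, coeff_mul]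
      exact sum_mem fun p _ ↦ Submodule.mul_mem_mul (ih _) (hGU _ (hZ _))
  ext j
  simpa [hU] using h k j

lemma X_pow_dvd_commMap {i j : ℕ} {Z W : A[X]} (hZ : X ^ i ∣ Z) (hW : X ^ j ∣ W) :
    X ^ (i + j) ∣ commMap Z W := by
  obtain ⟨Z, rfl⟩ := hZ
  obtain ⟨W, rfl⟩ := hW
  refine ⟨commMap Z W, ?_⟩
  have h1 : X ^ i * Z * (X ^ j * W) = X ^ (i + j) * (Z * W) := by
    rw [mul_assoc, ← mul_assoc Z, ← X_pow_mul, pow_add]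
    simp only [mul_assoc]
  have h2 : X ^ j * W * (X ^ i * Z) = X ^ (i + j) * (W * Z) := by
    rw [mul_assoc, ← mul_assoc W, ← X_pow_mul, add_comm, pow_add]
    simp only [mul_assoc]
  rw [commMap_apply, commMap_apply, h1, h2, mul_sub]

lemma X_pow_dvd_dexpTrunc_sub {K M : ℕ} (hM : 0 < M) {Z Z' W W' : A[X]} (hZ : X ∣ Z)
    (hZZ' : X ^ (K + 1) ∣ Z' - Z) (hWW' : X ^ K ∣ W' - W) :
    X ^ (K + 1) ∣ dexpTrunc M Z' W' - dexpTrunc M Z W - (W' - W) := by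
  have hstep : ∀ {V V' : A[X]}, X ^ K ∣ V' - V → X ^ (K + 1) ∣ commMap Z' V' - commMap Z V := by
    intro V V' h
    have e : commMap Z' V' - commMap Z V = commMap Z (V' - V) + commMap (Z' - Z) V' := by
      simp only [commMap_apply]
      noncomm_ring
    rw [e]
    refine dvd_add ?_ ?_
    · have h' := X_pow_dvd_commMap (i := 1) (Z := Z) (by rwa [pow_one]) h
      rwa [add_comm] at h'
    · have h' := X_pow_dvd_commMap (j := 0) (W := V') hZZ' (by rw [pow_zero]; exact one_dvd _)
      rwa [add_zero] at h'
  have hpow : ∀ m, X ^ (K + 1) ∣ (commMap Z' ^ (m + 1)) W' - (commMap Z ^ (m + 1)) W := by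
    intro m
    induction m with
    | zero => simpa using hstep hWW'
    | succ m ih =>
      rw [pow_succ' (commMap Z') (m + 1), pow_succ' (commMap Z) (m + 1), Module.End.mul_apply,
        Module.End.mul_apply]
      exact hstep ((pow_dvd_pow X K.le_succ).trans ih)
  obtain ⟨M, rfl⟩ := Nat.exists_eq_succ_of_ne_zero hM.ne'
  have e : dexpTrunc (M + 1) Z' W' - dexpTrunc (M + 1) Z W - (W' - W) =
      ∑ m ∈ Finset.range M, (((m + 1 + 1).factorial : ℚ))⁻¹ •
        ((commMap Z' ^ (m + 1)) W' - (commMap Z ^ (m + 1)) W) := by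
    simp only [dexpTrunc, Finset.sum_range_succ', smul_sub, Finset.sum_sub_distrib]
    simp
    abel
  rw [Nat.succ_eq_add_one, e]
  refine Finset.dvd_sum fun m _ ↦ ?_
  obtain ⟨P, hP⟩ := hpow m
  exact ⟨(((m + 1 + 1).factorial : ℚ))⁻¹ • P, by rw [hP, mul_smul_comm]⟩

lemma exists_dexpTrunc_derivative_approx
    (hG : ∀ m n, ∀ x ∈ G m, ∀ y ∈ G n, x * y - y * x ∈ G (m + n))
    {M : ℕ} (hM : 0 < M) {P : A[X]} (hP : P ∈ gradedPoly G 1) (K : ℕ) :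
    ∃ Q ∈ gradedPoly G 0, X ∣ Q ∧ X ^ K ∣ P - dexpTrunc M Q (derivative Q) := by
  induction K with
  | zero => exact ⟨0, zero_mem _, dvd_zero _, by simp⟩
  | succ K ih =>
    obtain ⟨Q, hQ, hXQ, hdvd⟩ := ih
    set E := P - dexpTrunc M Q (derivative Q) with hE
    have hEmem : E ∈ gradedPoly G 1 :=
      sub_mem hP (dexpTrunc_mem_gradedPoly hG M hQ (derivative_mem_gradedPoly hQ))
    set T : A[X] := monomial (K + 1) (((K : ℚ) + 1)⁻¹ • E.coeff K) with hT
    have hTmem : T ∈ gradedPoly G 0 := by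
      intro j
      rw [hT, coeff_monomial]
      split_ifs with h
      · subst h
        exact (G _).smul_mem _ (hEmem K)
      · exact zero_mem _
    have hTdvd : X ^ (K + 1) ∣ T := by
      rw [X_pow_dvd_iff]
      intro d hd
      rw [hT, coeff_monomial, if_neg (by omega)]
    have hT' : derivative T = monomial K (E.coeff K) := by
      rw [hT, derivative_monomial]
      congr 1
      have hK : ((K : ℚ) + 1) ≠ 0 := by positivity
      rw [show ((K + 1 : ℕ) : A) = algebraMap ℚ A ((K : ℚ) + 1) by simp, ← Algebra.commutes,
        ← Algebra.smul_def, smul_smul, mul_inv_cancel₀ hK, one_smul]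
    have hT'dvd : X ^ K ∣ derivative T := by
      rw [X_pow_dvd_iff]
      intro d hd
      rw [hT', coeff_monomial, if_neg (by omega)]
    refine ⟨Q + T, add_mem hQ hTmem, dvd_add hXQ ((dvd_pow_self X K.succ_ne_zero).trans hTdvd), ?_⟩
    have h1 := X_pow_dvd_dexpTrunc_sub (K := K) hM (Z := Q) (Z' := Q + T) (W := derivative Q)
      (W' := derivative (Q + T)) hXQ (by simpa using hTdvd) (by simpa using hT'dvd)
    have h2 : X ^ (K + 1) ∣ E - derivative T := by
      rw [X_pow_dvd_iff] at hdvd ⊢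
      intro d hd
      rw [coeff_sub, hT', coeff_monomial]
      split_ifs with h
      · rw [h, sub_self]
      · rw [hdvd d (by omega), sub_zero]
    have e : P - dexpTrunc M (Q + T) (derivative (Q + T)) = E - derivative T -
        (dexpTrunc M (Q + T) (derivative (Q + T)) - dexpTrunc M Q (derivative Q) -
          (derivative (Q + T) - derivative Q)) := by
      rw [hE, derivative_add]
      abel
    rw [e]
    exact dvd_sub h2 h1

lemma exists_dexpTrunc_derivative_eq
    (hG : ∀ m n, ∀ x ∈ G m, ∀ y ∈ G n, x * y - y * x ∈ G (m + n))
    {L : ℕ} (hL : ∀ m, L ≤ m → G m = ⊥)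
    {M : ℕ} (hM : 0 < M) {P : A[X]} (hP : P ∈ gradedPoly G 1) :
    ∃ Q ∈ gradedPoly G 0, X ∣ Q ∧ dexpTrunc M Q (derivative Q) = P := by
  obtain ⟨Q, hQ, hXQ, hdvd⟩ := exists_dexpTrunc_derivative_approx hG hM hP L
  refine ⟨Q, hQ, hXQ, (sub_eq_zero.mp ?_).symm⟩
  have hmem := sub_mem hP (dexpTrunc_mem_gradedPoly hG M hQ (derivative_mem_gradedPoly hQ))
  ext k
  rcases lt_or_ge k L with hk | hk
  · exact X_pow_dvd_iff.mp hdvd k hk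
  · simpa [hL (k + 1) (by omega)] using hmem k

/-- Equality of logarithmic derivatives integrates to equality of exponentials. -/
lemma exp_eval_one_mul_exp_neg {Q P : A[X]} {k M : ℕ} (hQ : Q ^ k = 0) (hP : P ^ k = 0)
    (hXQ : X ∣ Q) (hM : 2 * k ≤ M)
    (h : dexpTrunc M Q (derivative Q) = dexpTrunc M P (derivative P)) :
    IsNilpotent.exp (P.eval 1) * IsNilpotent.exp (-P.coeff 0) = IsNilpotent.exp (Q.eval 1) := by
  have hQn : IsNilpotent Q := ⟨k, hQ⟩
  have hPn : IsNilpotent P := ⟨k, hP⟩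
  let D : A[X] →ₗ[ℚ] A[X] := (derivative : A[X] →ₗ[A] A[X]).restrictScalars ℚ
  have hD : ∀ x y, D (x * y) = D x * y + x * D y := fun x y ↦ derivative_mul
  have hDQ : D (IsNilpotent.exp (-Q)) =
      -(IsNilpotent.exp (-Q) * dexpTrunc M Q (derivative Q)) := by
    rw [← mul_neg, ← show _ = -dexpTrunc M Q (derivative Q) from
      exp_mul_derivation_exp_neg D hD hQ hM, ← mul_assoc,
      IsNilpotent.exp_neg_mul_exp_self hQn, one_mul]
  have hDP : D (IsNilpotent.exp P) = dexpTrunc M P (derivative P) * IsNilpotent.exp P := by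
    have h1 := exp_mul_derivation_exp_neg D hD hP hM
    have h2 := hD (IsNilpotent.exp P) (IsNilpotent.exp (-P))
    rw [IsNilpotent.exp_mul_exp_neg_self hPn, h1] at h2
    have h3 : D 1 = 0 := derivative_one
    rw [h3, eq_comm, add_neg_eq_zero] at h2
    calc D (IsNilpotent.exp P)
        = D (IsNilpotent.exp P) * IsNilpotent.exp (-P) * IsNilpotent.exp P := by
          rw [mul_assoc, IsNilpotent.exp_neg_mul_exp_self hPn, mul_one]
      _ = _ := by rw [h2]; rfl
  have hF : derivative (IsNilpotent.exp (-Q) * IsNilpotent.exp P) = 0 := by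
    change D _ = 0
    rw [hD, hDQ, hDP, h, neg_mul, mul_assoc, neg_add_cancel]
  have : IsAddTorsionFree A := IsAddTorsionFree.of_module_rat A
  have hconst := eq_C_of_derivative_eq_zero hF
  let ev : A[X] →+* A := eval₂RingHom' (RingHom.id A) 1 fun _ ↦ Commute.one_right _
  have hev : ∀ p : A[X], ev p = p.eval 1 := fun _ ↦ rfl
  have hcc : ∀ p : A[X], constantCoeff p = p.coeff 0 := fun _ ↦ rfl
  have h0 : (IsNilpotent.exp (-Q) * IsNilpotent.exp P).coeff 0 =
      IsNilpotent.exp (P.coeff 0) := by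
    rw [← hcc, map_mul, IsNilpotent.map_exp hQn.neg, IsNilpotent.map_exp hPn, map_neg,
      hcc, X_dvd_iff.mp hXQ, neg_zero, IsNilpotent.exp_zero, one_mul, hcc]
  have h1 : IsNilpotent.exp (-Q.eval 1) * IsNilpotent.exp (P.eval 1) =
      IsNilpotent.exp (P.coeff 0) := by
    have := congrArg ev hconst
    rwa [map_mul, IsNilpotent.map_exp hQn.neg, IsNilpotent.map_exp hPn, map_neg, hev, hev,
      hev, eval_C, h0] at this
  have hQ1 : IsNilpotent (Q.eval 1) := hQn.map ev
  have hP0 : IsNilpotent (P.coeff 0) := hPn.map constantCoeff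
  calc IsNilpotent.exp (P.eval 1) * IsNilpotent.exp (-P.coeff 0)
      = IsNilpotent.exp (Q.eval 1) * (IsNilpotent.exp (-Q.eval 1) * IsNilpotent.exp (P.eval 1)) *
          IsNilpotent.exp (-P.coeff 0) := by
        rw [← mul_assoc, IsNilpotent.exp_mul_exp_neg_self hQ1, one_mul]
    _ = _ := by rw [h1, mul_assoc, IsNilpotent.exp_mul_exp_neg_self hP0, mul_one]

theorem exists_exp_add_mul_exp_neg
    (hG : ∀ m n, ∀ x ∈ G m, ∀ y ∈ G n, x * y - y * x ∈ G (m + n))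
    {L : ℕ} (hL : ∀ m, L ≤ m → G m = ⊥) {U : Submodule ℚ A} {k : ℕ} (hU : U ^ k = ⊥)
    (hGU : ∀ m, G m ≤ U) {M : ℕ} (hM : 0 < M) (hkM : 2 * k ≤ M) {a b : A} (ha : a ∈ G 0)
    (hb : b ∈ G 1) :
    ∃ R ∈ ⨆ m, G (m + 2), IsNilpotent (dexpTrunc M a b + R) ∧
      IsNilpotent.exp (a + b) * IsNilpotent.exp (-a) =
        IsNilpotent.exp (dexpTrunc M a b + R) := by
  set P : A[X] := C a + C b * X with hP
  have hPmem : P ∈ gradedPoly G 0 := by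
    rintro (_ | _ | j)
    · simpa [hP] using ha
    · simpa [hP, coeff_C] using hb
    · simp [hP]
  obtain ⟨Q, hQ, hXQ, hQP⟩ := exists_dexpTrunc_derivative_eq hG hL hM
    (dexpTrunc_mem_gradedPoly hG M hPmem (derivative_mem_gradedPoly hPmem))
  have hQ1 : Q.coeff 1 = dexpTrunc M a b := by
    have h := congrArg constantCoeff hQP
    rw [map_dexpTrunc, map_dexpTrunc, constantCoeff_apply, constantCoeff_apply,
      constantCoeff_apply, constantCoeff_apply, X_dvd_iff.mp hXQ, dexpTrunc_zero_left hM] at h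
    simpa [hP, coeff_derivative] using h
  have hQk := pow_eq_zero_of_mem_gradedPoly hU hGU hQ
  have hsum : Q.eval 1 =
      dexpTrunc M a b + ∑ i ∈ Finset.range Q.natDegree, Q.coeff (i + 2) := by
    rw [eval_eq_sum_range' (n := Q.natDegree + 2) (by omega), Finset.sum_range_succ',
      Finset.sum_range_succ', ← hQ1, X_dvd_iff.mp hXQ]
    simp only [one_pow, mul_one, add_zero]
    exact add_comm _ _
  refine ⟨∑ i ∈ Finset.range Q.natDegree, Q.coeff (i + 2), sum_mem fun i _ ↦
    Submodule.mem_iSup_of_mem i (hQ (i + 2)), ?_, ?_⟩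
  · rw [← hsum]
    exact IsNilpotent.map (f := eval₂RingHom' (RingHom.id A) 1 fun _ ↦ Commute.one_right _)
      ⟨k, hQk⟩
  · rw [← hsum, ← exp_eval_one_mul_exp_neg hQk (pow_eq_zero_of_mem_gradedPoly hU hGU hPmem) hXQ
      hkM hQP]
    simp [hP]

end GradedPolynomial

section LieMonomials

variable {V : Type*} [AddCommGroup V] [Module ℂ V] {N₀ N' : Module.End ℂ V}

lemma LieMon.one_le {x : Module.End ℂ V} {m l : ℕ} (h : LieMon N₀ N' x m l) : 1 ≤ l := by
  induction h <;> omega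

lemma LieMon.degree_le {x : Module.End ℂ V} {m l : ℕ} (h : LieMon N₀ N' x m l) : m ≤ l := by
  induction h <;> omega

lemma mul_sub_mul_mem_span {S T W : Set (Module.End ℂ V)}
    (h : ∀ x ∈ S, ∀ y ∈ T, x * y - y * x ∈ W) {x y : Module.End ℂ V}
    (hx : x ∈ Submodule.span ℂ S) (hy : y ∈ Submodule.span ℂ T) :
    x * y - y * x ∈ Submodule.span ℂ W := by
  induction hx, hy using Submodule.span_induction₂ with
  | mem_mem x y hx hy => exact Submodule.subset_span (h x hx y hy)
  | zero_left y _ => simp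
  | zero_right x _ => simp
  | add_left x y z _ _ _ h₁ h₂ =>
    convert add_mem h₁ h₂ using 1
    noncomm_ring
  | add_right x y z _ _ _ h₁ h₂ =>
    convert add_mem h₁ h₂ using 1
    noncomm_ring
  | smul_left r x y _ _ h =>
    rw [smul_mul_assoc, mul_smul_comm, ← smul_sub]
    exact Submodule.smul_mem _ r h
  | smul_right r x y _ _ h =>
    rw [smul_mul_assoc, mul_smul_comm, ← smul_sub]
    exact Submodule.smul_mem _ r h

attribute [local instance] LieRing.ofAssociativeRing

/-- The Lie algebra spanned by all Lie monomials. -/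
def lieMonSpan (N₀ N' : Module.End ℂ V) : LieSubalgebra ℂ (Module.End ℂ V) where
  __ := Submodule.span ℂ {x | ∃ m l : ℕ, LieMon N₀ N' x m l}
  lie_mem' hx hy := by
    refine mul_sub_mul_mem_span ?_ hx hy
    rintro x ⟨m, l, hx⟩ y ⟨n, k, hy⟩
    exact ⟨_, _, hx.bracket hy⟩

lemma lieMonSpan_isNilpotent [FiniteDimensional ℂ V]
    (hlen : ∃ L : ℕ, ∀ (x : Module.End ℂ V) (m l : ℕ), LieMon N₀ N' x m l → L ≤ l → x = 0) :
    LieRing.IsNilpotent (lieMonSpan N₀ N') := by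
  obtain ⟨L, hL⟩ := hlen
  rw [LieAlgebra.isNilpotent_iff_forall (R := ℂ)]
  rintro ⟨x, hx⟩
  refine ⟨L, ?_⟩
  have hpow : ∀ (n : ℕ) (z : lieMonSpan N₀ N'),
      (((LieAlgebra.ad ℂ (lieMonSpan N₀ N') ⟨x, hx⟩) ^ n) z : Module.End ℂ V) ∈
        Submodule.span ℂ {x | ∃ m l : ℕ, LieMon N₀ N' x m l ∧ n ≤ l} := by
    intro n z
    induction n with
    | zero => 
      refine Submodule.span_mono ?_ z.2
      rintro x ⟨m, l, h⟩
      exact ⟨m, l, h, Nat.zero_le _⟩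
    | succ n ih =>
      rw [pow_succ', Module.End.mul_apply]
      refine mul_sub_mul_mem_span ?_ hx ih
      rintro x ⟨m, l, hx⟩ y ⟨m', l', hy, hl'⟩
      exact ⟨_, _, hx.bracket hy, by have := hx.one_le; omega⟩
  have hbot : Submodule.span ℂ {x | ∃ m l : ℕ, LieMon N₀ N' x m l ∧ L ≤ l} = ⊥ := by
    rw [Submodule.span_eq_bot]
    rintro x ⟨m, l, hx, hl⟩
    exact hL x m l hx hl
  ext z : 1
  have := hpow L z
  rw [hbot, Submodule.mem_bot] at this
  exact Subtype.ext this

/-- A nilpotent Lie algebra spanned by nilpotent Lie monomials acts nilpotently. -/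
lemma lieModule_isNilpotent_lieMonSpan [FiniteDimensional ℂ V]
    (hnil : ∀ (x : Module.End ℂ V) (m l : ℕ), LieMon N₀ N' x m l → IsNilpotent x)
    (hlen : ∃ L : ℕ, ∀ (x : Module.End ℂ V) (m l : ℕ), LieMon N₀ N' x m l → L ≤ l → x = 0) :
    LieModule.IsNilpotent (lieMonSpan N₀ N') V := by
  have := lieMonSpan_isNilpotent hlen
  have hzero : ∀ (χ : LieModule.Weight ℂ (lieMonSpan N₀ N') V),
      (χ : lieMonSpan N₀ N' → ℂ) = 0 := by
    intro χ
    funext ⟨x, hx⟩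
    induction hx using Submodule.span_induction with
    | mem x h =>
      obtain ⟨m, l, h⟩ := h
      have hx : IsNilpotent (LieModule.toEnd ℂ (lieMonSpan N₀ N') V
          ⟨x, Submodule.subset_span ⟨m, l, h⟩⟩) := hnil x m l h
      exact LieModule.Weight.apply_eq_zero_of_isNilpotent _ hx χ
    | zero => exact map_zero χ
    | add x y hx hy h₁ h₂ =>
      have := map_add χ (⟨x, hx⟩ : lieMonSpan N₀ N') ⟨y, hy⟩
      rw [h₁, h₂] at this
      exact this.trans (by simp)
    | smul r x hx h =>
      have := map_smul χ r (⟨x, hx⟩ : lieMonSpan N₀ N')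
      rw [h] at this
      exact this.trans (by simp)
  have htop := LieModule.iSup_genWeightSpace_eq_top' ℂ (lieMonSpan N₀ N') V
  have htop0 : LieModule.genWeightSpace V (0 : lieMonSpan N₀ N' → ℂ) = ⊤ := by
    rw [eq_top_iff, ← htop]
    refine iSup_le fun χ ↦ ?_
    rw [hzero χ]
  rw [← LieModule.isNilpotent_of_top_iff' (R := ℂ), ← htop0]
  infer_instance

lemma exists_span_pow_eq_bot [FiniteDimensional ℂ V]
    (hnil : ∀ (x : Module.End ℂ V) (m l : ℕ), LieMon N₀ N' x m l → IsNilpotent x)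
    (hlen : ∃ L : ℕ, ∀ (x : Module.End ℂ V) (m l : ℕ), LieMon N₀ N' x m l → L ≤ l → x = 0) :
    ∃ k : ℕ, (Submodule.span ℂ {x | ∃ m l : ℕ, LieMon N₀ N' x m l}) ^ k = ⊥ := by
  have := lieModule_isNilpotent_lieMonSpan hnil hlen
  obtain ⟨k, hk⟩ := LieModule.IsNilpotent.nilpotent ℂ (lieMonSpan N₀ N') V
  have hmem : ∀ (n : ℕ), ∀ T ∈ (Submodule.span ℂ {x | ∃ m l : ℕ, LieMon N₀ N' x m l}) ^ n,
      ∀ (j : ℕ), ∀ v ∈ LieModule.lowerCentralSeries ℂ (lieMonSpan N₀ N') V j,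
        T v ∈ LieModule.lowerCentralSeries ℂ (lieMonSpan N₀ N') V (j + n) := by
    intro n
    induction n with
    | zero =>
      intro T hT j v hv
      rw [Submodule.pow_zero, Submodule.mem_one] at hT
      obtain ⟨r, rfl⟩ := hT
      exact Submodule.smul_mem _ r hv
    | succ n ih =>
      intro T hT
      rw [Submodule.pow_succ] at hT
      induction hT using Submodule.mul_induction_on' with
      | mem_mul_mem T hT x hx =>
        intro j v hv
        rw [← Nat.succ_add_eq_add_succ]
        refine ih T hT _ _ ?_
        rw [LieModule.lowerCentralSeries_succ]
        exact LieSubmodule.lie_mem_lie (x := (⟨x, hx⟩ : lieMonSpan N₀ N'))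
          (LieSubmodule.mem_top _) hv
      | add x _ y _ h₁ h₂ => exact fun j v hv ↦ add_mem (h₁ j v hv) (h₂ j v hv)
  refine ⟨k, (Submodule.eq_bot_iff _).mpr fun T hT ↦ ?_⟩
  ext v
  simpa [hk] using hmem k T hT 0 v (by simp)

end LieMonomials

lemma pow_finrank_eq_zero_of_isNilpotent {V : Type*} [AddCommGroup V] [Module ℂ V]
    [FiniteDimensional ℂ V] {x : Module.End ℂ V} (hx : IsNilpotent x) :
    x ^ Module.finrank ℂ V = 0 := by
  have h := LinearMap.aeval_self_charpoly x
  rwa [hx.charpoly_eq_X_pow_finrank, map_pow, Polynomial.aeval_X] at h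

lemma ratCast_inv_factorial_smul {E : Type*} [AddCommGroup E] [Module ℂ E] [Module ℚ E]
    (n : ℕ) (x : E) : ((n.factorial : ℂ))⁻¹ • x = ((n.factorial : ℚ))⁻¹ • x := by
  simpa using ratCast_smul_eq ℂ ℚ ((n.factorial : ℚ))⁻¹ x

lemma expNil_eq_exp {V : Type*} [AddCommGroup V] [Module ℂ V] [FiniteDimensional ℂ V]
    [Algebra ℚ (Module.End ℂ V)] {x : Module.End ℂ V} (hx : IsNilpotent x) :
    expNil x = IsNilpotent.exp x := by
  rw [IsNilpotent.exp_eq_sum (k := Module.finrank ℂ V + 1)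
    (pow_eq_zero_of_le (Nat.le_succ _) (pow_finrank_eq_zero_of_isNilpotent hx)), expNil]
  refine Finset.sum_congr rfl fun i _ ↦ ?_
  exact ratCast_inv_factorial_smul _ _

lemma dexpTrunc_eq_sum_adE {V : Type*} [AddCommGroup V] [Module ℂ V]
    [Algebra ℚ (Module.End ℂ V)] {a b : Module.End ℂ V} {k M : ℕ} (ha : a ^ k = 0)
    (hM : 2 * k ≤ M) :
    dexpTrunc M a b =
      ∑ m ∈ Finset.range (2 * k), (((m + 1).factorial : ℂ))⁻¹ • ((adE a) ^ m) b := by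
  have hpow : ∀ m, (commMap a ^ m) b = (adE a ^ m) b := by
    intro m
    induction m with
    | zero => rfl
    | succ m ih =>
      rw [pow_succ', pow_succ', Module.End.mul_apply, Module.End.mul_apply, ih]
      rfl
  rw [dexpTrunc, ← Finset.sum_subset (Finset.range_mono hM)]
  · refine Finset.sum_congr rfl fun m _ ↦ ?_
    rw [hpow, ratCast_inv_factorial_smul]
  · intro m _ hm
    rw [pow_eq_zero_of_le (by simpa using hm) (commMap_pow_eq_zero ha), LinearMap.zero_apply,
      smul_zero]


lemma restrictScalars_pow_le {K A : Type*} [Field K] [CharZero K] [Ring A] [Algebra K A]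
    [Algebra ℚ A] (U : Submodule K A) (n : ℕ) :
    (U.restrictScalars ℚ) ^ n ≤ (U ^ n).restrictScalars ℚ := by
  obtain rfl | hn := eq_or_ne n 0
  · rw [pow_zero, pow_zero, Submodule.one_le]
    exact (Submodule.one_le (P := (1 : Submodule K A))).mp le_rfl
  · exact (Submodule.restrictScalars_pow hn).ge

/-- Campbell–Baker–Hausdorff:
`exp(iy(N₀ + N')) exp(−iyN₀) = exp(Q)` with
`Q = ((e^{ad(iyN₀)} − 1)/ad(iyN₀))(iyN') + R = Σ_m (ad(iyN₀))^m (iyN')/(m+1)! + R`,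
where `R` lies in the (span of the) Lie monomials containing `N'` at least twice. -/
theorem cbh_linear_in_Nprime {V : Type*} [AddCommGroup V] [Module ℂ V]
    [FiniteDimensional ℂ V] (N₀ N' : Module.End ℂ V)
    (hnil : ∀ (x : Module.End ℂ V) (m l : ℕ), LieMon N₀ N' x m l →
      x ^ (Module.finrank ℂ V + 1) = 0)
    (hlen : ∃ L : ℕ, ∀ (x : Module.End ℂ V) (m l : ℕ), LieMon N₀ N' x m l → L ≤ l → x = 0)
    (y : ℝ) :
    ∃ R ∈ Submodule.span ℂ {x : Module.End ℂ V | ∃ m l : ℕ, 2 ≤ m ∧ LieMon N₀ N' x m l},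
      expNil ((Complex.I * (y : ℂ)) • (N₀ + N')) * expNil (-((Complex.I * (y : ℂ)) • N₀)) =
        expNil ((∑ m ∈ Finset.range (2 * Module.finrank ℂ V + 2),
          (((m + 1).factorial : ℂ))⁻¹ •
            ((adE ((Complex.I * (y : ℂ)) • N₀)) ^ m) ((Complex.I * (y : ℂ)) • N')) + R) := by
  let : Algebra ℚ (Module.End ℂ V) :=
    ((algebraMap ℂ (Module.End ℂ V)).comp (algebraMap ℚ ℂ)).toAlgebra' fun c x ↦
      Algebra.commutes (algebraMap ℚ ℂ c) x
  have : IsScalarTower ℚ ℂ (Module.End ℂ V) := IsScalarTower.of_algebraMap_eq fun _ ↦ rfl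
  obtain ⟨k, hk⟩ := exists_span_pow_eq_bot (fun x m l h ↦ ⟨_, hnil x m l h⟩) hlen
  obtain ⟨L, hL⟩ := hlen
  set c : ℂ := Complex.I * (y : ℂ)
  set U : Submodule ℂ (Module.End ℂ V) := Submodule.span ℂ {x | ∃ m l : ℕ, LieMon N₀ N' x m l}
  let G : ℕ → Submodule ℂ (Module.End ℂ V) := fun m ↦
    Submodule.span ℂ {x | ∃ l : ℕ, LieMon N₀ N' x m l}
  have hU : (U.restrictScalars ℚ) ^ k = ⊥ := by
    rw [eq_bot_iff]
    intro x hx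
    simpa [hk] using restrictScalars_pow_le U k hx
  have h₀ : N₀ ^ (Module.finrank ℂ V + 1) = 0 := hnil _ _ _ .base0
  have hc₀ : (c • N₀) ^ (Module.finrank ℂ V + 1) = 0 := by rw [smul_pow, h₀, smul_zero]
  obtain ⟨R, hR, hRn, hexp⟩ := exists_exp_add_mul_exp_neg
    (G := fun m ↦ (G m).restrictScalars ℚ) (U := U.restrictScalars ℚ) (k := k) (L := L)
    (M := 2 * k + 2 * (Module.finrank ℂ V + 1)) (a := c • N₀) (b := c • N')
    (fun m n x hx z hz ↦ by
      refine mul_sub_mul_mem_span ?_ hx hz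
      rintro x ⟨l, hx⟩ z ⟨l', hz⟩
      exact ⟨_, hx.bracket hz⟩)
    (fun m hm ↦ by
      rw [Submodule.restrictScalars_eq_bot_iff, Submodule.span_eq_bot]
      rintro x ⟨l, hx⟩
      exact hL x m l hx (hm.trans hx.degree_le))
    hU (fun m ↦ Submodule.span_mono fun x ⟨l, hx⟩ ↦ ⟨m, l, hx⟩) (by omega) (by omega)
    ((G 0).smul_mem c (Submodule.subset_span ⟨1, .base0⟩))
    ((G 1).smul_mem c (Submodule.subset_span ⟨1, .base1⟩))
  rw [dexpTrunc_eq_sum_adE hc₀ (by omega)] at hexp hRn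
  rw [mul_add_one] at hexp hRn
  refine ⟨R, ?_, ?_⟩
  · have hle : ⨆ m, (G (m + 2)).restrictScalars ℚ ≤ (Submodule.span ℂ
        {x : Module.End ℂ V | ∃ m l : ℕ, 2 ≤ m ∧ LieMon N₀ N' x m l}).restrictScalars ℚ :=
      iSup_le fun m ↦ Submodule.span_mono fun x ⟨l, hx⟩ ↦ ⟨m + 2, l, by omega, hx⟩
    exact hle hR
  · have hsum : c • (N₀ + N') ∈ U := U.smul_mem c
      (add_mem (Submodule.subset_span ⟨_, _, .base0⟩) (Submodule.subset_span ⟨_, _, .base1⟩))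
    have hsumn : IsNilpotent (c • (N₀ + N')) := by
      refine ⟨k, ?_⟩
      have := Submodule.pow_mem_pow U hsum k
      rwa [hk, Submodule.mem_bot] at this
    rw [expNil_eq_exp hsumn, expNil_eq_exp (IsNilpotent.neg ⟨_, hc₀⟩), expNil_eq_exp hRn,
      smul_add]
    exact hexp
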